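/- arXiv:2107.09449 — 2 statements merged into one kernel-verified Lean document; each statement's English description precedes it below -/
import Mathlib

section
/- If k = k₁ + k₂ with k₁, k₂ > 0, then every uniform k-palette (a,b,c) can be written as a coordinatewise sum (a,b,c) = (a₁,b₁,c₁) + (a₂,b₂,c₂) where (a₁,b₁,c₁) is a uniform k₁-palette and (a₂,b₂,c₂) is a uniform k₂-palette. -/
/-- A uniform k-palette: a + b + c = k with each entry at most ⌈k/2⌉. -/
def UniformPalette (k a b c : ℕ) : Prop :=
  a + b + c = k ∧ a ≤ (k + 1) / 2 ∧ b ≤ (k + 1) / 2 ∧ c ≤ (k + 1) / 2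

/-!
Write `mⱼ = ⌈kⱼ/2⌉`. Splitting `a` means choosing the first summand `x` with
`a i - m₂ ≤ x i ≤ min (a i) m₁` and total `k₁`. Raising one entry at a time from the lower bound to
the upper bound realizes every intermediate total, so only the sums of the two bounds have to be
estimated. As `min (a i) m₁ = a i - (a i - m₁)`, both estimates say that the total excess of `a`
over one cap `mⱼ` is at most the other total `k₃₋ⱼ`. If two entries reach the cap, the part of `a`
below the cap already sums to at least `2 * mⱼ ≥ kⱼ`; if only one does, this is the bound on that
entry.
-/

section Fintype

variable {ι : Type*} [Fintype ι]

/-- A uniform `k`-palette with an arbitrary finite set `ι` of colours, as the vector of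
multiplicities; `UniformPalette` is the case of three colours. -/
def UniformPaletteOn (k : ℕ) (a : ι → ℕ) : Prop :=
  ∑ i, a i = k ∧ ∀ i, a i ≤ (k + 1) / 2

theorem uniformPaletteOn_fin_three {k : ℕ} {a : Fin 3 → ℕ} :
    UniformPaletteOn k a ↔ UniformPalette k (a 0) (a 1) (a 2) := by
  simp [UniformPaletteOn, UniformPalette, Fin.sum_univ_three, Fin.forall_fin_succ]

theorem exists_mem_Icc_sum_eq {l u : ι → ℕ} (hlu : l ≤ u) {n : ℕ} (hln : ∑ i, l i ≤ n)
    (hnu : n ≤ ∑ i, u i) : ∃ x ∈ Set.Icc l u, ∑ i, x i = n := by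
  classical
  induction n, hln using Nat.le_induction with
  | base => exact ⟨l, ⟨le_rfl, hlu⟩, rfl⟩
  | succ n _ ih =>
    obtain ⟨x, ⟨hlx, hxu⟩, rfl⟩ := ih (Nat.le_of_succ_le hnu)
    obtain ⟨i, -, hi⟩ : ∃ i ∈ Finset.univ, x i < u i := Finset.exists_lt_of_sum_lt hnu
    refine ⟨x + Pi.single i 1, ⟨hlx.trans le_self_add, fun j ↦ ?_⟩, ?_⟩
    · obtain rfl | hj := eq_or_ne j i
      · simpa using hi
      · simpa [hj] using hxu j
    · simp [Finset.sum_add_distrib]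

theorem sum_tsub_add_sum_min (a : ι → ℕ) (m : ℕ) :
    ∑ i, (a i - m) + ∑ i, min (a i) m = ∑ i, a i := by
  simp only [← Finset.sum_add_distrib, tsub_add_min]

theorem sum_tsub_le_of_sum_eq_add {a : ι → ℕ} {k l m : ℕ} (hsum : ∑ i, a i = k + l) (hl : l ≤ 2 * m)
    (ha : ∀ i, a i ≤ k + m) : ∑ i, (a i - m) ≤ k := by
  classical
  by_cases hpair : ∃ i j, i ≠ j ∧ m ≤ a i ∧ m ≤ a j
  · obtain ⟨i, j, hij, hi, hj⟩ := hpair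
    have hmin : 2 * m ≤ ∑ t, min (a t) m := calc
      2 * m = ∑ t ∈ {i, j}, min (a t) m := by simp [Finset.sum_pair hij, hi, hj, two_mul]
      _ ≤ ∑ t, min (a t) m := Finset.sum_le_sum_of_subset (Finset.subset_univ _)
    have hsplit := sum_tsub_add_sum_min a m
    omega
  · by_cases hone : ∃ i, m ≤ a i
    · obtain ⟨i, hi⟩ := hone
      have hzero : ∀ j ≠ i, a j - m = 0 := fun j hj ↦
        tsub_eq_zero_of_le (le_of_not_ge fun hmj ↦ hpair ⟨i, j, hj.symm, hi, hmj⟩)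
      rw [Fintype.sum_eq_single i hzero]
      exact tsub_le_iff_right.2 (ha i)
    · push Not at hone
      simp [fun i ↦ tsub_eq_zero_of_le (hone i).le]

theorem exists_add_eq_of_le_add {a : ι → ℕ} {k₁ k₂ m₁ m₂ : ℕ} (hsum : ∑ i, a i = k₁ + k₂)
    (ha : ∀ i, a i ≤ m₁ + m₂) (hm₁ : m₁ ≤ k₁) (hk₁ : k₁ ≤ 2 * m₁) (hm₂ : m₂ ≤ k₂)
    (hk₂ : k₂ ≤ 2 * m₂) :
    ∃ x y : ι → ℕ, x + y = a ∧ (∑ i, x i = k₁ ∧ ∀ i, x i ≤ m₁) ∧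
      (∑ i, y i = k₂ ∧ ∀ i, y i ≤ m₂) := by
  have hlower : ∑ i, (a i - m₂) ≤ k₁ :=
    sum_tsub_le_of_sum_eq_add hsum hk₂ fun i ↦ (ha i).trans (by gcongr)
  have hupper : k₁ ≤ ∑ i, min (a i) m₁ := by
    have hexcess : ∑ i, (a i - m₁) ≤ k₂ :=
      sum_tsub_le_of_sum_eq_add (hsum.trans (add_comm _ _)) hk₁ fun i ↦ (ha i).trans (by omega)
    have hsplit := sum_tsub_add_sum_min a m₁
    omega
  have hle : (fun i ↦ a i - m₂) ≤ fun i ↦ min (a i) m₁ := fun i ↦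
    le_min tsub_le_self (tsub_le_iff_right.2 (ha i))
  obtain ⟨x, ⟨hlx, hxu⟩, hx⟩ := exists_mem_Icc_sum_eq hle hlower hupper
  have hxa : x ≤ a := fun i ↦ (hxu i).trans (min_le_left _ _)
  obtain ⟨y, rfl⟩ := exists_add_of_le hxa
  have hy : ∑ i, y i = k₂ := by
    simpa only [Pi.add_apply, Finset.sum_add_distrib, hx, Nat.add_left_cancel_iff] using hsum
  have hym : ∀ i, y i ≤ m₂ := fun i ↦ by
    have : x i + y i - m₂ ≤ x i := hlx i
    omega
  exact ⟨x, y, rfl, ⟨hx, fun i ↦ (hxu i).trans (min_le_right _ _)⟩, hy, hym⟩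

theorem stmt_4_general {k₁ k₂ : ℕ} {a : ι → ℕ} (ha : UniformPaletteOn (k₁ + k₂) a) :
    ∃ a₁ a₂ : ι → ℕ, a₁ + a₂ = a ∧ UniformPaletteOn k₁ a₁ ∧ UniformPaletteOn k₂ a₂ :=
  exists_add_eq_of_le_add ha.1 (fun i ↦ (ha.2 i).trans (by omega)) (by omega) (by omega)
    (by omega) (by omega)

end Fintype

theorem stmt_4 (k k₁ k₂ : ℕ) (h : k = k₁ + k₂) (h₁ : 0 < k₁) (h₂ : 0 < k₂)
    (a b c : ℕ) (hp : UniformPalette k a b c) :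
    ∃ a₁ b₁ c₁ a₂ b₂ c₂ : ℕ,
      UniformPalette k₁ a₁ b₁ c₁ ∧ UniformPalette k₂ a₂ b₂ c₂ ∧
      a = a₁ + a₂ ∧ b = b₁ + b₂ ∧ c = c₁ + c₂ := by
  obtain ⟨x, y, hxy, hx, hy⟩ :=
    stmt_4_general (a := ![a, b, c]) (uniformPaletteOn_fin_three.2 (h ▸ hp))
  exact ⟨x 0, x 1, x 2, y 0, y 1, y 2, uniformPaletteOn_fin_three.1 hx,
    uniformPaletteOn_fin_three.1 hy, congrFun hxy.symm 0, congrFun hxy.symm 1, congrFun hxy.symm 2⟩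
end

section
/- Let G be a connected graph with finite maximum degree Δ and minimum degree δ satisfying δ ≥ Δ/2, and G ≠ K₂. Then G admits an edge-coloring with 3 colors such that the only automorphism of G preserving the colors of all edges is the identity (i.e., D'(G) ≤ 3). -/
/-!
There is a normal spanning tree (every edge of the graph joins a vertex to one of its ancestors) in
which some branch, from the root `r` to a leaf `t`, is a longest path of the graph.

If the tree is a path, its edges and the end `r` can be marked directly with three colors. Otherwise
the tree edges that lead to no leaf other than `t` get color `0`. The ends of longest paths of color
`0` are `r` and `t`, which are told apart by color `2`, so both are fixed.

All edges at a leaf lead to ancestors, at least `Δ / 2` of them, and the one to the parent is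
distinguished; hence colors `1` and `2` on them encode any label below `Δ`. Label the vertices
by residues modulo `Δ` so that the children of every vertex `x` get consecutive residues that begin
with the label of `x`. As a vertex other than `r` has fewer than `Δ` children, its label can be read
off from theirs, so a color-preserving automorphism preserves all labels, from the leaves up. It
then fixes all vertices, from the root down, because siblings have different labels.
-/

open SimpleGraph

section EdgeColoring

variable {V α : Type*} {G : SimpleGraph V} {φ : Sym2 V → α} {σ : G ≃g G}

/-- The automorphism `σ` preserves the colors of all edges of `G`. Colors are attached to all
unordered pairs, but only those of edges matter. -/
def IsColorPreserving (φ : Sym2 V → α) (σ : G ≃g G) : Prop :=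
  ∀ u v, G.Adj u v → φ s(σ u, σ v) = φ s(u, v)

/-- The edge-coloring `φ` is preserved by no automorphism of `G` except the identity. -/
def IsAsymmetricColoring (G : SimpleGraph V) (φ : Sym2 V → α) : Prop :=
  ∀ σ : G ≃g G, IsColorPreserving φ σ → ∀ x, σ x = x

/-- The set of neighbors of `v` joined to `v` by an edge of color `c`. -/
def colorNeighborSet (G : SimpleGraph V) (φ : Sym2 V → α) (c : α) (v : V) : Set V :=
  {u | G.Adj v u ∧ φ s(v, u) = c}

namespace IsColorPreserving

lemma symm (hσ : IsColorPreserving φ σ) : IsColorPreserving φ σ.symm := by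
  intro u v huv
  simpa only [RelIso.apply_symm_apply] using
    (hσ (σ.symm u) (σ.symm v) (σ.symm.map_adj_iff.2 huv)).symm

lemma image_colorNeighborSet (hσ : IsColorPreserving φ σ) (c : α) (v : V) :
    σ '' colorNeighborSet G φ c v = colorNeighborSet G φ c (σ v) := by
  ext w
  obtain ⟨u, rfl⟩ := σ.surjective w
  rw [σ.injective.mem_set_image]
  simp only [colorNeighborSet, Set.mem_ofPred_eq, σ.map_adj_iff]
  exact and_congr_right fun hvu => by rw [hσ v u hvu]

lemma colorNeighborSet_nonempty_iff (hσ : IsColorPreserving φ σ) (c : α) (v : V) :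
    (colorNeighborSet G φ c (σ v)).Nonempty ↔ (colorNeighborSet G φ c v).Nonempty := by
  rw [← hσ.image_colorNeighborSet, Set.image_nonempty]

lemma color_eq_of_mem_edges_map (hσ : IsColorPreserving φ σ) {c : α} {u v : V} {p : G.Walk u v}
    (hp : ∀ e ∈ p.edges, φ e = c) : ∀ e ∈ (p.map σ.toHom).edges, φ e = c := by
  intro e he
  obtain ⟨⟨x, y⟩, hxy, rfl⟩ := List.mem_map.1 (p.edges_map σ.toHom ▸ he)
  exact (hσ x y (p.adj_of_mem_edges hxy)).trans (hp _ hxy)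

end IsColorPreserving

end EdgeColoring

section MarkedSetCode

variable {α β : Type*}

open Classical in
/-- The number encoded by a set `X` of which one possible element `p` is distinguished: the
membership of `p` is its lowest bit and the number of other elements is its half. -/
noncomputable def markedSetCode (p : α) (X : Set α) : ℕ :=
  2 * (X \ {p}).ncard + if p ∈ X then 1 else 0

lemma markedSetCode_image {f : α → β} (hf : Function.Injective f) (p : α) (X : Set α) :
    markedSetCode (f p) (f '' X) = markedSetCode p X := by
  rw [markedSetCode, markedSetCode, ← Set.image_singleton, ← Set.image_sdiff hf,
    Set.ncard_image_of_injective _ hf, hf.mem_set_image]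

lemma exists_subset_markedSetCode_eq {N : Set α} {p : α} {n : ℕ} (hp : p ∈ N)
    (hn : n < 2 * N.ncard) : ∃ X ⊆ N, markedSetCode p X = n := by
  have hcard : n / 2 ≤ (N \ {p}).ncard := by
    rw [Set.ncard_sdiff_singleton_of_mem hp]
    omega
  obtain ⟨Y, hYN, hY⟩ := Set.exists_subset_card_eq hcard
  have hpY : p ∉ Y := fun h => (hYN h).2 rfl
  have hYN' : Y ⊆ N := hYN.trans Set.sdiff_subset
  rcases Nat.mod_two_eq_zero_or_one n with hmod | hmod
  · refine ⟨Y, hYN', ?_⟩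
    rw [markedSetCode, Set.sdiff_singleton_eq_self hpY, if_neg hpY]
    omega
  · refine ⟨insert p Y, Set.insert_subset hp hYN', ?_⟩
    rw [markedSetCode, Set.insert_sdiff_self_of_notMem hpY, if_pos (Set.mem_insert p Y)]
    omega

end MarkedSetCode

section CyclicInterval

variable {D m : ℕ}

/-- The residues `a, a + 1, …, a + m - 1` modulo `D`, with repetitions if `D < m`. -/
def cyclicInterval (a : ZMod D) (m : ℕ) : Set (ZMod D) :=
  (fun n : ℕ => a + n) '' Set.Iio m

lemma injOn_add_natCast_Iio (a : ZMod D) (hm : m ≤ D) :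
    Set.InjOn (fun n : ℕ => a + n) (Set.Iio m) := fun _ hi _ hj hij =>
  CharP.natCast_injOn_Iio (ZMod D) D (Set.Iio_subset_Iio hm hi) (Set.Iio_subset_Iio hm hj)
    (add_left_cancel hij)

/-- A nonempty cyclic interval that is not the whole circle has a unique element whose predecessor
lies outside the interval. -/
lemma cyclicInterval_left_injective (hm : 0 < m) (hmD : m < D) :
    Function.Injective fun a : ZMod D => cyclicInterval a m := by
  intro a b hab
  dsimp only at hab
  obtain ⟨k, hk, hka⟩ : a ∈ cyclicInterval b m := hab ▸ ⟨0, hm, by simp⟩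
  cases k with
  | zero => simpa using hka.symm
  | succ k =>
    obtain ⟨l, hl, hlb⟩ : b + k ∈ cyclicInterval a m :=
      hab ▸ ⟨k, (Nat.lt_succ_self k).trans hk, rfl⟩
    have hcast : a + (l + 1 : ℕ) = a + (0 : ℕ) := by
      push_cast at hka hlb ⊢
      linear_combination hlb + hka
    have hlD : l + 1 < D := lt_of_le_of_lt hl hmD
    exact absurd (injOn_add_natCast_Iio a le_rfl hlD ((Nat.succ_pos l).trans hlD) hcast)
      l.succ_ne_zero

end CyclicInterval

section ConnectedGraphs

variable {V : Type*} {G : SimpleGraph V}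

lemma ncard_neighborSet (v : V) [Fintype (G.neighborSet v)] :
    (G.neighborSet v).ncard = G.degree v := by
  rw [Set.ncard_eq_toFinset_card', ← neighborFinset_def, card_neighborFinset_eq_degree]

lemma eq_top_of_connected_of_card_le_two [Finite V] (hG : G.Connected) (hV : Nat.card V ≤ 2) :
    G = ⊤ := by
  refine eq_top_iff.2 fun u v huv => ?_
  have : Nontrivial V := ⟨u, v, huv⟩
  obtain ⟨w, huw⟩ := hG.preconnected.exists_adj_of_nontrivial u
  suffices w = v from this ▸ huw
  by_contra hwv
  have hcard := Set.ncard_le_card ({u, v, w} : Set V)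
  rw [Set.ncard_eq_three.2 ⟨u, v, w, huv, huw.ne, Ne.symm hwv, rfl⟩] at hcard
  omega

lemma two_lt_card_of_connected [Finite V] [Nontrivial V] (hG : G.Connected)
    (hK2 : IsEmpty (G ≃g (⊤ : SimpleGraph (Fin 2)))) : 2 < Nat.card V := by
  by_contra! hV
  obtain rfl := eq_top_of_connected_of_card_le_two hG hV
  exact hK2.false (Iso.completeGraph (Finite.equivFinOfCardEq (hV.antisymm Finite.one_lt_card)))

end ConnectedGraphs

section LongestPath

variable {V : Type*} {G : SimpleGraph V} {a b x y z : V}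

lemma exists_isPath_length_eq_of_isCycle {c : G.Walk x x} (hc : c.IsCycle) (hy : y ∈ c.support)
    (hyz : G.Adj y z) (hz : z ∉ c.support) :
    ∃ (u v : V) (p : G.Walk u v), p.IsPath ∧ p.length = c.length := by
  classical
  have hcycle := hc.rotate hy
  have hz' : z ∉ (c.rotate y hy).tail.support := fun hmem => hz <| by
    rw [Walk.support_tail_of_not_nil _ hcycle.not_nil] at hmem
    exact (Walk.mem_support_rotate_iff c y hy).1 (List.mem_of_mem_tail hmem)
  refine ⟨_, _, (c.rotate y hy).tail.concat hyz, hcycle.isPath_tail.concat hz' hyz, ?_⟩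
  rw [Walk.length_concat, Walk.length_tail_add_one hcycle.not_nil, Walk.length_rotate]

/-- The walk `q` is a path, and no path of `G` is longer. -/
structure IsLongestPath (q : G.Walk a b) : Prop where
  isPath : q.IsPath
  length_le : ∀ ⦃u v : V⦄ (p : G.Walk u v), p.IsPath → p.length ≤ q.length

namespace IsLongestPath

variable {q : G.Walk a b}

lemma of_length_le (hq : IsLongestPath q) {p : G.Walk x y} (hp : p.IsPath)
    (hqp : q.length ≤ p.length) : IsLongestPath p :=
  ⟨hp, fun _ _ p' hp' => (hq.length_le p' hp').trans hqp⟩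

lemma reverse (hq : IsLongestPath q) : IsLongestPath q.reverse :=
  hq.of_length_le hq.isPath.reverse q.length_reverse.ge

lemma map_iso (hq : IsLongestPath q) (σ : G ≃g G) : IsLongestPath (q.map σ.toHom) :=
  hq.of_length_le (hq.isPath.map σ.injective) (Walk.length_map _ _).ge

lemma mem_support_of_adj (hq : IsLongestPath q) (haz : G.Adj a z) : z ∈ q.support := by
  by_contra hz
  have hlt := hq.length_le (Walk.cons haz.symm q) (hq.isPath.cons hz)
  rw [Walk.length_cons] at hlt
  omega

lemma mem_support_of_adj_ends (hq : IsLongestPath q) (hG : G.Connected) (hba : G.Adj b a)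
    (hlen : 2 ≤ q.length) (x : V) : x ∈ q.support := by
  by_contra hx
  obtain ⟨w⟩ := hG.preconnected a x
  obtain ⟨⟨⟨y, z⟩, hyz⟩, -, hy, hz⟩ :=
    w.exists_boundary_dart {v | v ∈ q.support} q.start_mem_support hx
  have hcycle : (Walk.cons hba q).IsCycle := by
    rw [Walk.isCycle_iff_isPath_tail_and_le_length]
    exact ⟨by simpa using hq.isPath, by rw [Walk.length_cons]; omega⟩
  have hz' : z ∉ (Walk.cons hba q).support := by
    rw [Walk.support_cons, List.mem_cons]
    rintro (rfl | hzq)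
    · exact hz q.end_mem_support
    · exact hz hzq
  obtain ⟨u, v, p, hp, hpq⟩ :=
    exists_isPath_length_eq_of_isCycle hcycle (List.mem_cons_of_mem _ hy) hyz hz'
  have hle := hq.length_le p hp
  rw [hpq, Walk.length_cons] at hle
  omega

end IsLongestPath

end LongestPath

/-- A spanning tree of `G` rooted at `r`, encoded by the parent and the depth of every vertex. The
root is its own parent. -/
structure RootedSpanningTree {V : Type*} (G : SimpleGraph V) (r : V) where
  parent : V → V
  depth : V → ℕ
  parent_root : parent r = r
  depth_root : depth r = 0
  adj_parent : ∀ {x}, x ≠ r → G.Adj x (parent x)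
  depth_eq : ∀ {x}, x ≠ r → depth x = depth (parent x) + 1

namespace RootedSpanningTree

variable {V : Type*} {G : SimpleGraph V} {r u v x : V}

section Ancestors

variable (T : RootedSpanningTree G r)

lemma depth_eq_zero_iff : T.depth x = 0 ↔ x = r := by
  refine ⟨fun hx => ?_, fun hx => hx ▸ T.depth_root⟩
  by_contra hxr
  have := T.depth_eq hxr
  omega

@[elab_as_elim]
lemma parentInduction {motive : V → Prop} (root : motive r)
    (parent : ∀ x, x ≠ r → motive (T.parent x) → motive x) (x : V) : motive x := by
  induction hn : T.depth x generalizing x with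
  | zero => exact T.depth_eq_zero_iff.1 hn ▸ root
  | succ n ih =>
    have hx : x ≠ r := fun hx => by simp [hx, T.depth_root] at hn
    exact parent x hx (ih _ (by have := T.depth_eq hx; omega))

/-- The vertex `u` lies on the branch of the tree from `x` to the root; `u = x` is allowed. -/
def IsAncestor (u x : V) : Prop := ∃ k, T.parent^[k] x = u

lemma isAncestor_refl (x : V) : T.IsAncestor x x := ⟨0, rfl⟩

lemma isAncestor_parent (x : V) : T.IsAncestor (T.parent x) x := ⟨1, rfl⟩

lemma depth_iterate_parent (k : ℕ) (x : V) : T.depth (T.parent^[k] x) = T.depth x - k := by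
  induction k generalizing x with
  | zero => rfl
  | succ k ih =>
    rw [Function.iterate_succ_apply, ih]
    by_cases hx : x = r
    · rw [hx, T.parent_root, T.depth_root, Nat.zero_sub, Nat.zero_sub]
    · rw [T.depth_eq hx, Nat.add_sub_add_right]

lemma isAncestor_root (x : V) : T.IsAncestor r x :=
  ⟨T.depth x, T.depth_eq_zero_iff.1 (by rw [depth_iterate_parent, Nat.sub_self])⟩

lemma isAncestor_root_right_iff : T.IsAncestor u r ↔ u = r := by
  refine ⟨?_, fun hu => hu ▸ T.isAncestor_refl r⟩
  rintro ⟨k, rfl⟩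
  exact Function.iterate_fixed T.parent_root k

lemma isAncestor_iff_eq_or_isAncestor_parent :
    T.IsAncestor u x ↔ u = x ∨ T.IsAncestor u (T.parent x) := by
  refine ⟨?_, ?_⟩
  · rintro ⟨_ | k, hk⟩
    · exact Or.inl hk.symm
    · exact Or.inr ⟨k, hk⟩
  · rintro (rfl | ⟨k, hk⟩)
    · exact T.isAncestor_refl u
    · exact ⟨k + 1, hk⟩

variable {T}

namespace IsAncestor

lemma of_parent (h : T.IsAncestor u (T.parent x)) : T.IsAncestor u x :=
  T.isAncestor_iff_eq_or_isAncestor_parent.2 (Or.inr h)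

lemma parent_of_ne (h : T.IsAncestor u x) (hux : u ≠ x) : T.IsAncestor u (T.parent x) :=
  (T.isAncestor_iff_eq_or_isAncestor_parent.1 h).resolve_left hux

lemma trans (huv : T.IsAncestor u v) (hvx : T.IsAncestor v x) : T.IsAncestor u x := by
  obtain ⟨k, rfl⟩ := huv
  obtain ⟨l, rfl⟩ := hvx
  exact ⟨k + l, Function.iterate_add_apply _ k l x⟩

lemma depth_le (h : T.IsAncestor u x) : T.depth u ≤ T.depth x := by
  obtain ⟨k, rfl⟩ := h
  rw [T.depth_iterate_parent]
  exact Nat.sub_le _ _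

lemma eq_of_depth_eq (hu : T.IsAncestor u x) (hv : T.IsAncestor v x)
    (huv : T.depth u = T.depth v) : u = v := by
  induction x using T.parentInduction with
  | root => rw [T.isAncestor_root_right_iff.1 hu, T.isAncestor_root_right_iff.1 hv]
  | parent x hx ih =>
    have hdepth := T.depth_eq hx
    rcases T.isAncestor_iff_eq_or_isAncestor_parent.1 hu with rfl | hu'
    · by_contra hne
      have := (hv.parent_of_ne (Ne.symm hne)).depth_le
      omega
    · rcases T.isAncestor_iff_eq_or_isAncestor_parent.1 hv with rfl | hv'
      · have := hu'.depth_le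
        omega
      · exact ih hu' hv'

lemma exists_child (h : T.IsAncestor u x) (hux : u ≠ x) :
    ∃ c, c ≠ r ∧ T.parent c = u ∧ T.IsAncestor c x := by
  induction x using T.parentInduction with
  | root => exact absurd (T.isAncestor_root_right_iff.1 h) hux
  | parent x hx ih =>
    by_cases hparent : u = T.parent x
    · exact ⟨x, hx, hparent.symm, T.isAncestor_refl x⟩
    · obtain ⟨c, hcr, hcu, hcx⟩ := ih (h.parent_of_ne hux) hparent
      exact ⟨c, hcr, hcu, hcx.of_parent⟩

end IsAncestor

end Ancestors

section Branch

variable (T : RootedSpanningTree G r)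

open Classical in
/-- The walk in the tree from `x` to the root. -/
noncomputable def branch (x : V) : G.Walk x r :=
  if hx : x = r then Walk.nil.copy hx.symm rfl
  else Walk.cons (T.adj_parent hx) (branch (T.parent x))
  termination_by T.depth x
  decreasing_by
    rw [T.depth_eq hx]
    exact Nat.lt_succ_self _

lemma branch_root : T.branch r = Walk.nil := by
  rw [branch, dif_pos rfl, Walk.copy_rfl_rfl]

lemma branch_of_ne (hx : x ≠ r) :
    T.branch x = Walk.cons (T.adj_parent hx) (T.branch (T.parent x)) := by
  rw [branch, dif_neg hx]

lemma length_branch (x : V) : (T.branch x).length = T.depth x := by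
  induction x using T.parentInduction with
  | root => rw [branch_root, Walk.length_nil, T.depth_root]
  | parent x hx ih => rw [T.branch_of_ne hx, Walk.length_cons, ih, T.depth_eq hx]

lemma mem_support_branch : u ∈ (T.branch x).support ↔ T.IsAncestor u x := by
  induction x using T.parentInduction with
  | root =>
    rw [branch_root, Walk.support_nil, List.mem_singleton, isAncestor_root_right_iff]
  | parent x hx ih =>
    rw [T.branch_of_ne hx, Walk.support_cons, List.mem_cons, ih,
      ← isAncestor_iff_eq_or_isAncestor_parent]

lemma isPath_branch (x : V) : (T.branch x).IsPath := by
  induction x using T.parentInduction with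
  | root =>
    rw [branch_root]
    exact Walk.IsPath.nil
  | parent x hx ih =>
    rw [T.branch_of_ne hx]
    refine ih.cons fun hmem => ?_
    have hle := (T.mem_support_branch.1 hmem).depth_le
    rw [T.depth_eq hx] at hle
    omega

lemma exists_of_mem_edges_branch {e : Sym2 V} (he : e ∈ (T.branch x).edges) :
    ∃ y, y ≠ r ∧ T.IsAncestor y x ∧ e = s(y, T.parent y) := by
  induction x using T.parentInduction with
  | root => simp [branch_root] at he
  | parent x hx ih =>
    rw [T.branch_of_ne hx, Walk.edges_cons, List.mem_cons] at he
    rcases he with rfl | he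
    · exact ⟨x, hx, T.isAncestor_refl x, rfl⟩
    · obtain ⟨y, hyr, hyx, rfl⟩ := ih he
      exact ⟨y, hyr, hyx.of_parent, rfl⟩

end Branch

section Normal

variable (T : RootedSpanningTree G r)

open Classical in
/-- The tree obtained from `T` by moving the subtree of all descendants of `v` so that `v` becomes
a child of its neighbor `w`. -/
noncomputable def reattach {w : V} (hvw : G.Adj v w) (hw : ¬T.IsAncestor v w) :
    RootedSpanningTree G r :=
  have hvr : v ≠ r := fun hvr => hw (hvr ▸ T.isAncestor_root w)
  { parent := Function.update T.parent v w
    depth := fun x =>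
      if T.IsAncestor v x then T.depth w + 1 + (T.depth x - T.depth v) else T.depth x
    parent_root := by rw [Function.update_of_ne hvr.symm, T.parent_root]
    depth_root := by rw [if_neg (mt T.isAncestor_root_right_iff.1 hvr), T.depth_root]
    adj_parent := by
      intro x hx
      by_cases hxv : x = v
      · rwa [hxv, Function.update_self]
      · rw [Function.update_of_ne hxv]
        exact T.adj_parent hx
    depth_eq := by
      intro x hx
      by_cases hxv : x = v
      · rw [hxv, Function.update_self, if_pos (T.isAncestor_refl v), if_neg hw, Nat.sub_self]
      · rw [Function.update_of_ne hxv, T.depth_eq hx]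
        by_cases hvx : T.IsAncestor v x
        · have hvp := hvx.parent_of_ne (Ne.symm hxv)
          rw [if_pos hvx, if_pos hvp]
          have := hvp.depth_le
          omega
        · rw [if_neg hvx, if_neg fun hvp => hvx hvp.of_parent] }

variable {T}

lemma parent_reattach_self {w : V} (hvw : G.Adj v w) (hw : ¬T.IsAncestor v w) :
    (T.reattach hvw hw).parent v = w := by
  simp [reattach]

lemma parent_reattach_of_ne {w : V} (hvw : G.Adj v w) (hw : ¬T.IsAncestor v w) (hxv : x ≠ v) :
    (T.reattach hvw hw).parent x = T.parent x := by
  simp [reattach, hxv]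

lemma depth_reattach_self {w : V} (hvw : G.Adj v w) (hw : ¬T.IsAncestor v w) :
    (T.reattach hvw hw).depth v = T.depth w + 1 := by
  simp [reattach, T.isAncestor_refl]

lemma depth_le_depth_reattach {w : V} (hvw : G.Adj v w) (hw : ¬T.IsAncestor v w)
    (hdepth : T.depth v ≤ T.depth w) : T.depth ≤ (T.reattach hvw hw).depth := by
  intro x
  dsimp only [reattach]
  split_ifs <;> omega

lemma IsAncestor.of_reattach {w : V} {hvw : G.Adj v w} {hw : ¬T.IsAncestor v w}
    (h : (T.reattach hvw hw).IsAncestor u x) (hvx : ¬T.IsAncestor v x) : T.IsAncestor u x := by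
  induction x using T.parentInduction with
  | root =>
    rw [isAncestor_root_right_iff] at h ⊢
    exact h
  | parent x _ ih =>
    have hxv : x ≠ v := fun hxv => hvx (hxv ▸ T.isAncestor_refl x)
    rw [isAncestor_iff_eq_or_isAncestor_parent] at h ⊢
    rw [parent_reattach_of_ne hvw hw hxv] at h
    exact h.imp_right fun h => ih h fun hvp => hvx hvp.of_parent

lemma nonempty_of_connected (hG : G.Connected) (r : V) : Nonempty (RootedSpanningTree G r) := by
  have exists_adj_dist : ∀ x, ∃ y, x ≠ r → G.Adj x y ∧ G.dist x r = G.dist y r + 1 := by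
    intro x
    by_cases hx : x = r
    · exact ⟨x, fun h => absurd hx h⟩
    · obtain ⟨p, hp⟩ := hG.exists_walk_length_eq_dist x r
      cases p with
      | nil => exact absurd rfl hx
      | @cons _ y _ hxy p =>
        refine ⟨y, fun _ => ⟨hxy, ?_⟩⟩
        have hle := dist_le p
        have htriangle := hG.dist_triangle (u := x) (v := y) (w := r)
        rw [dist_eq_one_iff_adj.2 hxy] at htriangle
        rw [Walk.length_cons] at hp
        omega
  choose f hf using exists_adj_dist
  classical
  exact ⟨{
    parent := Function.update f r r
    depth := fun x => G.dist x r
    parent_root := Function.update_self ..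
    depth_root := dist_self
    adj_parent := fun hx => by rw [Function.update_of_ne hx]; exact (hf _ hx).1
    depth_eq := fun hx => by rw [Function.update_of_ne hx]; exact (hf _ hx).2 }⟩

lemma exists_depth_eq_length (hG : G.Connected) {p : G.Walk v r} (hp : p.IsPath) :
    ∃ T : RootedSpanningTree G r,
      T.depth v = p.length ∧ ∀ u, T.IsAncestor u v → u ∈ p.support := by
  induction p with
  | @nil r =>
    obtain ⟨T⟩ := nonempty_of_connected hG r
    exact ⟨T, T.depth_root, fun u hu => by simpa using T.isAncestor_root_right_iff.1 hu⟩
  | @cons v w r hvw p ih =>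
    rw [Walk.cons_isPath_iff] at hp
    obtain ⟨T, hdepth, hsupport⟩ := ih hp.1
    have hw : ¬T.IsAncestor v w := fun h => hp.2 (hsupport v h)
    refine ⟨T.reattach hvw hw, ?_, fun u hu => ?_⟩
    · rw [depth_reattach_self, hdepth, Walk.length_cons]
    · rw [isAncestor_iff_eq_or_isAncestor_parent, parent_reattach_self] at hu
      rw [Walk.support_cons, List.mem_cons]
      exact hu.imp_right fun hu => hsupport u (hu.of_reattach hw)

variable (T) in
/-- The tree is normal: every edge of the graph joins a vertex to one of its ancestors. -/
def IsNormal : Prop :=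
  ∀ ⦃u v : V⦄, G.Adj u v → T.IsAncestor u v ∨ T.IsAncestor v u

lemma depth_lt_card [Finite V] (T : RootedSpanningTree G r) (x : V) : T.depth x < Nat.card V := by
  have := Fintype.ofFinite V
  rw [← T.length_branch, Nat.card_eq_fintype_card]
  exact (T.isPath_branch x).length_lt

/-- Among the trees that are at least as deep as `T` everywhere, a deepest one is normal, as
otherwise a subtree could be reattached further down. -/
lemma exists_isNormal_depth_le [Finite V] (T : RootedSpanningTree G r) :
    ∃ T' : RootedSpanningTree G r, T'.IsNormal ∧ T.depth ≤ T'.depth := by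
  have hfin : (Set.range (depth (G := G) (r := r))).Finite :=
    (Set.Finite.pi' fun _ => Set.finite_lt_nat (Nat.card V)).subset <| by
      rintro _ ⟨T, rfl⟩ x
      exact T.depth_lt_card x
  obtain ⟨_, hle, ⟨T', rfl⟩, hmax⟩ := hfin.exists_le_maximal ⟨T, rfl⟩
  have isAncestor_of_depth_le : ∀ u v, G.Adj u v → T'.depth u ≤ T'.depth v →
      T'.IsAncestor u v := by
    intro u v huv hdepth
    by_contra hv
    have hlt : T'.depth u < (T'.reattach huv hv).depth u := by
      rw [depth_reattach_self]
      exact Nat.lt_succ_of_le hdepth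
    exact (hmax ⟨_, rfl⟩ (depth_le_depth_reattach huv hv hdepth) u).not_gt hlt
  refine ⟨T', fun u v huv => ?_, hle⟩
  exact (le_total (T'.depth u) (T'.depth v)).imp (isAncestor_of_depth_le u v huv)
    (isAncestor_of_depth_le v u huv.symm)

lemma exists_isNormal_isLongestPath_branch [Finite V] (hG : G.Connected) :
    ∃ (r t : V) (T : RootedSpanningTree G r), T.IsNormal ∧ IsLongestPath (T.branch t) := by
  have := hG.nonempty
  obtain ⟨t, r, p, hp, hlongest⟩ := Walk.exists_isPath_forall_isPath_length_le_length G
  obtain ⟨T₀, hdepth, -⟩ := exists_depth_eq_length hG hp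
  obtain ⟨T, hnormal, hle⟩ := T₀.exists_isNormal_depth_le
  have hlong : IsLongestPath p := ⟨hp, fun u v p' hp' => hlongest u v p' hp'⟩
  exact ⟨r, t, T, hnormal, hlong.of_length_le (T.isPath_branch t) <| by
    rw [T.length_branch, ← hdepth]
    exact hle t⟩

end Normal

section TreeEdges

variable (T : RootedSpanningTree G r)

/-- The set of children of `x` in the tree. -/
def children (x : V) : Set V := {y | y ≠ r ∧ T.parent y = x}

/-- The vertex `x` is a leaf of the tree. The root does not count as a leaf even if it has degree
one in the tree. -/
def IsLeaf (x : V) : Prop := x ≠ r ∧ T.children x = ∅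

/-- The tree edges that lead from a vertex of `C` to its parent. -/
def parentEdges (C : Set V) : Set (Sym2 V) := (fun y => s(y, T.parent y)) '' (C \ {r})

/-- The tree as a subgraph of `G`. -/
def toSimpleGraph : SimpleGraph V := fromEdgeSet (T.parentEdges Set.univ)

variable {T} {C : Set V}

lemma mk_parent_mem_parentEdges (hxC : x ∈ C) (hx : x ≠ r) : s(x, T.parent x) ∈ T.parentEdges C :=
  ⟨x, ⟨hxC, hx⟩, rfl⟩

lemma mk_mem_parentEdges_iff : s(u, v) ∈ T.parentEdges C ↔
    u ∈ C ∧ u ∈ T.children v ∨ v ∈ C ∧ v ∈ T.children u := by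
  constructor
  · rintro ⟨y, ⟨hyC, hyr⟩, hy⟩
    rcases Sym2.eq_iff.1 hy with ⟨rfl, rfl⟩ | ⟨rfl, rfl⟩
    · exact Or.inl ⟨hyC, hyr, rfl⟩
    · exact Or.inr ⟨hyC, hyr, rfl⟩
  · rintro (⟨huC, hur, rfl⟩ | ⟨hvC, hvr, rfl⟩)
    · exact mk_parent_mem_parentEdges huC hur
    · rw [Sym2.eq_swap]
      exact mk_parent_mem_parentEdges hvC hvr

lemma parentEdges_mono {C' : Set V} (hC : C ⊆ C') : T.parentEdges C ⊆ T.parentEdges C' :=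
  Set.image_mono (Set.sdiff_subset_sdiff_left hC)

lemma parentEdges_subset_edgeSet : T.parentEdges C ⊆ G.edgeSet := by
  rintro _ ⟨y, ⟨-, hyr⟩, rfl⟩
  exact T.adj_parent hyr

lemma children_subset_neighborSet : T.children x ⊆ G.neighborSet x := by
  rintro y ⟨hyr, rfl⟩
  exact (T.adj_parent hyr).symm

lemma edgeSet_toSimpleGraph : T.toSimpleGraph.edgeSet = T.parentEdges Set.univ := by
  rw [toSimpleGraph, edgeSet_fromEdgeSet, sdiff_eq_left, Set.disjoint_left]
  exact fun e he => G.not_isDiag_of_mem_edgeSet (parentEdges_subset_edgeSet he)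

lemma toSimpleGraph_le : T.toSimpleGraph ≤ G := by
  rw [← edgeSet_subset_edgeSet, edgeSet_toSimpleGraph]
  exact parentEdges_subset_edgeSet

lemma adj_toSimpleGraph_iff :
    T.toSimpleGraph.Adj u v ↔ u ∈ T.children v ∨ v ∈ T.children u := by
  rw [← mem_edgeSet, edgeSet_toSimpleGraph, mk_mem_parentEdges_iff]
  simp only [Set.mem_univ, true_and]

lemma eq_parent_of_adj_toSimpleGraph (h : T.toSimpleGraph.Adj u v)
    (hdepth : T.depth v ≤ T.depth u) : v = T.parent u := by
  rcases adj_toSimpleGraph_iff.1 h with ⟨-, hv⟩ | ⟨hvr, rfl⟩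
  · exact hv.symm
  · have := T.depth_eq hvr
    omega

/-- Both edges of a cycle at one of its deepest vertices would lead to the parent. -/
lemma isAcyclic_toSimpleGraph : T.toSimpleGraph.IsAcyclic := by
  classical
  intro v c hc
  obtain ⟨u, hu, hmax⟩ := c.support.toFinset.exists_max_image T.depth
    ⟨v, List.mem_toFinset.2 c.start_mem_support⟩
  rw [List.mem_toFinset] at hu
  have hrotate := hc.rotate hu
  have hdepth : ∀ x ∈ (c.rotate u hu).support, T.depth x ≤ T.depth u := fun x hx =>
    hmax x (List.mem_toFinset.2 ((Walk.mem_support_rotate_iff c u hu).1 hx))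
  refine hrotate.snd_ne_penultimate ?_
  rw [eq_parent_of_adj_toSimpleGraph ((c.rotate u hu).adj_snd hrotate.not_nil)
      (hdepth _ (Walk.getVert_mem_support _ _)),
    eq_parent_of_adj_toSimpleGraph ((c.rotate u hu).adj_penultimate hrotate.not_nil).symm
      (hdepth _ (Walk.getVert_mem_support _ _))]

lemma isLeaf_of_isLongestPath {a b : V} {q : G.Walk a b} (hq : IsLongestPath q)
    (hedges : ∀ e ∈ q.edges, e ∈ T.parentEdges Set.univ) (ha : a ≠ r) : T.IsLeaf a := by
  refine ⟨ha, Set.eq_empty_of_forall_notMem fun y hy => ?_⟩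
  have hedges' : ∀ e ∈ q.edges, e ∈ T.toSimpleGraph.edgeSet := by
    rwa [edgeSet_toSimpleGraph]
  have eq_snd : ∀ z, T.toSimpleGraph.Adj a z → z = (q.transfer _ hedges').snd := fun z hz =>
    isAcyclic_toSimpleGraph.eq_snd_of_adj_start (hq.isPath.transfer hedges') hz <| by
      rw [Walk.support_transfer]
      exact hq.mem_support_of_adj (toSimpleGraph_le hz)
  have hparent : y = T.parent a := (eq_snd y (adj_toSimpleGraph_iff.2 (Or.inr hy))).trans
    (eq_snd _ (adj_toSimpleGraph_iff.2 (Or.inl ⟨ha, rfl⟩))).symm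
  have hdepth_a := T.depth_eq ha
  have hdepth_y := T.depth_eq hy.1
  rw [hy.2] at hdepth_y
  rw [← hparent] at hdepth_a
  omega

lemma map_mem_and_depth_map_and_parent_map (hC : ∀ x ∈ C, T.parent x ∈ C) (hrC : r ∈ C)
    {f : V → V} (hf : Function.Injective f) (hfr : f r = r)
    (hfC : ∀ x ∈ C, x ≠ r → s(f x, f (T.parent x)) ∈ T.parentEdges C) (hx : x ∈ C) :
    f x ∈ C ∧ T.depth (f x) = T.depth x ∧ T.parent (f x) = f (T.parent x) := by
  induction x using T.parentInduction with
  | root => rw [T.parent_root, hfr, T.parent_root]; exact ⟨hrC, rfl, rfl⟩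
  | parent x hxr ih =>
    obtain ⟨-, hdepth, hparent⟩ := ih (hC x hx)
    rcases mk_mem_parentEdges_iff.1 (hfC x hx hxr) with ⟨hmem, hfxr, hfx⟩ | ⟨-, hfpr, hfp⟩
    · exact ⟨hmem, by rw [T.depth_eq hfxr, hfx, hdepth, T.depth_eq hxr], hfx⟩
    · -- The edge cannot be reversed, as `f x` would be the image of the grandparent of `x`.
      have hgrandparent : T.parent (T.parent x) = x := hf (hparent.symm.trans hfp)
      have hpr : T.parent x ≠ r := fun hpr => hfpr (by rw [hpr, hfr])
      have hdepth_x := T.depth_eq hxr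
      have hdepth_p := T.depth_eq hpr
      rw [hgrandparent] at hdepth_p
      omega

end TreeEdges

section Hamiltonian

variable (T : RootedSpanningTree G r)

open Classical in
/-- The coloring for trees that are Hamiltonian paths: tree edges get color `1` at the root and
color `0` elsewhere. -/
noncomputable def pathColoring (e : Sym2 V) : Fin 3 :=
  if e ∈ T.parentEdges Set.univ then if r ∈ e then 1 else 0 else 2

variable {T}

lemma pathColoring_eq_zero_iff {e : Sym2 V} :
    T.pathColoring e = 0 ↔ e ∈ T.parentEdges Set.univ ∧ r ∉ e := by
  unfold pathColoring
  split_ifs <;> simp_all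

lemma pathColoring_eq_one_iff {e : Sym2 V} :
    T.pathColoring e = 1 ↔ e ∈ T.parentEdges Set.univ ∧ r ∈ e := by
  unfold pathColoring
  split_ifs <;> simp_all

lemma pathColoring_eq_two_iff {e : Sym2 V} :
    T.pathColoring e = 2 ↔ e ∉ T.parentEdges Set.univ := by
  unfold pathColoring
  split_ifs <;> simp_all

lemma exists_depth_eq {n : ℕ} (hn : n ≤ T.depth x) : ∃ y, T.depth y = n :=
  ⟨T.parent^[T.depth x - n] x, by rw [T.depth_iterate_parent]; omega⟩

lemma eq_root_iff_of_injective_depth (hinj : Function.Injective T.depth) (hx : 2 ≤ T.depth x) :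
    v = r ↔ (colorNeighborSet G T.pathColoring 1 v).Nonempty ∧
      ¬(colorNeighborSet G T.pathColoring 0 v).Nonempty := by
  obtain ⟨y, hy⟩ := exists_depth_eq hx
  have hyr : y ≠ r := fun h => by simp [h, T.depth_root] at hy
  have hpy := T.depth_eq hyr
  have hpr : T.parent y ≠ r := fun h => by simp [h, T.depth_root] at hpy; omega
  have hppy := T.depth_eq hpr
  have hpp : T.parent (T.parent y) = r := T.depth_eq_zero_iff.1 (by omega)
  constructor
  · rintro rfl
    refine ⟨⟨T.parent y, ?_, pathColoring_eq_one_iff.2 ⟨?_, Sym2.mem_mk_left _ _⟩⟩, ?_⟩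
    · simpa only [hpp] using (T.adj_parent hpr).symm
    · exact mk_mem_parentEdges_iff.2 (Or.inr ⟨Set.mem_univ _, hpr, hpp⟩)
    · rintro ⟨u, -, hu⟩
      exact (pathColoring_eq_zero_iff.1 hu).2 (Sym2.mem_mk_left _ _)
  · rintro ⟨⟨u, -, hu⟩, hzero⟩
    by_contra hvr
    obtain ⟨hedge, hru⟩ := pathColoring_eq_one_iff.1 hu
    obtain rfl : r = u := (Sym2.mem_iff.1 hru).resolve_left (Ne.symm hvr)
    have hv : T.parent v = r := by
      rcases mk_mem_parentEdges_iff.1 hedge with ⟨-, -, hv⟩ | ⟨-, hr, -⟩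
      · exact hv
      · exact absurd rfl hr
    obtain rfl : v = T.parent y := hinj (by rw [T.depth_eq hvr, hv, T.depth_root]; omega)
    refine hzero ⟨y, (T.adj_parent hyr).symm, pathColoring_eq_zero_iff.2 ⟨?_, ?_⟩⟩
    · exact mk_mem_parentEdges_iff.2 (Or.inr ⟨Set.mem_univ _, hyr, rfl⟩)
    · rw [Sym2.mem_iff, not_or]
      exact ⟨hpr.symm, hyr.symm⟩

lemma isAsymmetricColoring_pathColoring (hinj : Function.Injective T.depth)
    (hx : 2 ≤ T.depth x) : IsAsymmetricColoring G T.pathColoring := by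
  intro σ hσ y
  have hroot : σ r = r := by
    rw [eq_root_iff_of_injective_depth hinj hx, hσ.colorNeighborSet_nonempty_iff,
      hσ.colorNeighborSet_nonempty_iff, ← eq_root_iff_of_injective_depth hinj hx]
  refine hinj (map_mem_and_depth_map_and_parent_map (C := Set.univ) (fun _ _ => Set.mem_univ _)
    (Set.mem_univ r) σ.injective hroot (fun z _ hz => ?_) (Set.mem_univ y)).2.1
  by_contra hedge
  rw [← pathColoring_eq_two_iff, hσ _ _ (T.adj_parent hz), pathColoring_eq_two_iff] at hedge
  exact hedge (mk_parent_mem_parentEdges (Set.mem_univ z) hz)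

end Hamiltonian

section CyclicLabelling

/-- The labels of the children of each vertex `x` are distinct and form the cyclic interval that
starts at the label of `x`. -/
def IsCyclicLabelling (T : RootedSpanningTree G r) {D : ℕ} (label : V → ZMod D) : Prop :=
  ∀ x, Set.InjOn label (T.children x) ∧
    label '' T.children x = cyclicInterval (label x) (T.children x).ncard

variable {T : RootedSpanningTree G r} {D : ℕ} {label : V → ZMod D}

lemma childrenInduction [Finite V] {motive : V → Prop}
    (step : ∀ x, (∀ y ∈ T.children x, motive y) → motive x) (x : V) : motive x := by
  induction hn : Nat.card V - T.depth x using Nat.strong_induction_on generalizing x with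
  | _ n ih =>
    refine step x fun y hy => ih _ ?_ y rfl
    have hlt := T.depth_lt_card y
    have hdepth := T.depth_eq hy.1
    rw [hy.2] at hdepth
    omega

lemma exists_eq_parent_add {A : Type*} [AddCommMonoid A] (T : RootedSpanningTree G r) (g : V → A) :
    ∃ f : V → A, ∀ x, x ≠ r → f x = f (T.parent x) + g x := by
  refine ⟨fun x => ∑ k ∈ Finset.range (T.depth x), g (T.parent^[k] x), fun x hx => ?_⟩
  beta_reduce
  rw [T.depth_eq hx, Finset.sum_range_succ']
  rfl

lemma exists_isCyclicLabelling [Finite V] (T : RootedSpanningTree G r)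
    (hD : ∀ x, (T.children x).ncard ≤ D) :
    ∃ label : V → ZMod D, T.IsCyclicLabelling label := by
  have exists_rank : ∀ x, ∃ rank : V → ℕ,
      Set.BijOn rank (T.children x) (Set.Iio (T.children x).ncard) := fun x =>
    (Set.toFinite _).exists_bijOn_of_encard_eq <| by
      rw [← (Set.toFinite (T.children x)).cast_ncard_eq, ← (Set.finite_Iio _).cast_ncard_eq,
        Set.ncard_Iio_nat]
  choose rank hrank using exists_rank
  obtain ⟨label, hlabel⟩ := T.exists_eq_parent_add fun x => (rank (T.parent x) x : ZMod D)
  have label_eq : ∀ x, ∀ y ∈ T.children x, label y = label x + rank x y := by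
    rintro _ y ⟨hyr, rfl⟩
    exact hlabel y hyr
  refine ⟨label, fun x => ⟨fun y hy z hz hyz => ?_, ?_⟩⟩
  · rw [label_eq x y hy, label_eq x z hz] at hyz
    exact (hrank x).injOn hy hz <|
      injOn_add_natCast_Iio _ (hD x) ((hrank x).mapsTo hy) ((hrank x).mapsTo hz) hyz
  · rw [cyclicInterval, ← (hrank x).image_eq, Set.image_image]
    exact Set.image_congr (label_eq x)

section Rigidity

variable {σ : V ≃ V}

lemma map_root_of_parent_map (hσ : ∀ x, T.parent (σ x) = σ (T.parent x)) : σ r = r := by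
  by_contra hr
  have hdepth := T.depth_eq hr
  rw [hσ, T.parent_root] at hdepth
  omega

lemma image_children (hσ : ∀ x, T.parent (σ x) = σ (T.parent x)) (x : V) :
    σ '' T.children x = T.children (σ x) := by
  ext z
  obtain ⟨y, rfl⟩ := σ.surjective z
  have hroot : σ y = r ↔ y = r := by
    rw [← σ.injective.eq_iff (a := y), map_root_of_parent_map hσ]
  rw [σ.injective.mem_set_image]
  simp only [children, Set.mem_ofPred_eq, hσ, σ.injective.eq_iff, Ne, hroot]

lemma IsCyclicLabelling.label_map [Finite V] (hlabel : T.IsCyclicLabelling label)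
    (hD : ∀ x, x ≠ r → (T.children x).ncard < D) (hσ : ∀ x, T.parent (σ x) = σ (T.parent x))
    (hleaf : ∀ l, T.IsLeaf l → label (σ l) = label l) : ∀ x, x ≠ r → label (σ x) = label x := by
  intro x
  induction x using childrenInduction (T := T) with
  | step x ih =>
    intro hx
    rcases (T.children x).eq_empty_or_nonempty with hempty | hne
    · exact hleaf x ⟨hx, hempty⟩
    · have himage : label '' T.children (σ x) = label '' T.children x := by
        rw [← image_children hσ, Set.image_image]
        exact Set.image_congr fun y hy => ih y hy hy.1
      rw [(hlabel _).2, (hlabel _).2, ← image_children hσ,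
        Set.ncard_image_of_injective _ σ.injective] at himage
      exact cyclicInterval_left_injective ((Set.ncard_pos (Set.toFinite _)).2 hne) (hD x hx) himage

lemma IsCyclicLabelling.eq_self_of_parent_map [Finite V] (hlabel : T.IsCyclicLabelling label)
    (hD : ∀ x, x ≠ r → (T.children x).ncard < D) (hσ : ∀ x, T.parent (σ x) = σ (T.parent x))
    (hleaf : ∀ l, T.IsLeaf l → label (σ l) = label l) (x : V) : σ x = x := by
  induction x using T.parentInduction with
  | root => exact map_root_of_parent_map hσ
  | parent x hx ih =>
    have hmem : σ x ∈ T.children (T.parent x) := by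
      rw [← ih, ← image_children hσ]
      exact Set.mem_image_of_mem σ ⟨hx, rfl⟩
    exact (hlabel _).1 hmem ⟨hx, rfl⟩ (hlabel.label_map hD hσ hleaf x hx)

end Rigidity

end CyclicLabelling

section Degrees

variable {T : RootedSpanningTree G r} {t : V}

lemma parent_notMem_children (hx : x ≠ r) : T.parent x ∉ T.children x := by
  rintro ⟨hpr, hpp⟩
  have hdepth_x := T.depth_eq hx
  have hdepth_p := T.depth_eq hpr
  rw [hpp] at hdepth_p
  omega

lemma ncard_children_le_degree [Fintype (G.neighborSet x)] : (T.children x).ncard ≤ G.degree x := by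
  rw [← ncard_neighborSet]
  exact Set.ncard_le_ncard children_subset_neighborSet (Set.toFinite _)

lemma ncard_children_lt_degree [Fintype (G.neighborSet x)] (hx : x ≠ r) :
    (T.children x).ncard < G.degree x := by
  rw [← ncard_neighborSet]
  refine Set.ncard_lt_ncard ?_ (Set.toFinite _)
  exact children_subset_neighborSet.ssubset_of_mem_notMem (T.adj_parent hx)
    (parent_notMem_children hx)

lemma exists_branching_of_not_injective_depth (hG : G.Connected)
    (hlong : IsLongestPath (T.branch t)) (hinj : ¬Function.Injective T.depth) :
    ∃ a b c, a ≠ r ∧ c ∈ T.children a ∧ T.IsAncestor c t ∧ G.Adj a b ∧ ¬T.IsAncestor b t := by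
  obtain ⟨x, hx⟩ : ∃ x, ¬T.IsAncestor x t := by
    by_contra! hall
    exact hinj fun u v huv => (hall u).eq_of_depth_eq (hall v) huv
  obtain ⟨w⟩ := hG.preconnected t x
  obtain ⟨⟨⟨a, b⟩, hab⟩, -, ha, hb⟩ :=
    w.exists_boundary_dart {y | T.IsAncestor y t} (T.isAncestor_refl t) hx
  have hat : a ≠ t := by
    rintro rfl
    exact hb (T.mem_support_branch.1 (hlong.mem_support_of_adj hab))
  have har : a ≠ r := by
    rintro rfl
    refine hb (T.mem_support_branch.1 ?_)
    simpa using hlong.reverse.mem_support_of_adj hab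
  obtain ⟨c, hcr, hca, hct⟩ := IsAncestor.exists_child ha hat
  exact ⟨a, b, c, har, ⟨hcr, hca⟩, hct, hab, hb⟩

lemma two_le_depth_of_not_injective_depth (hG : G.Connected)
    (hlong : IsLongestPath (T.branch t)) (hinj : ¬Function.Injective T.depth) :
    2 ≤ T.depth t := by
  obtain ⟨a, -, c, har, ⟨hcr, rfl⟩, hct, -⟩ :=
    exists_branching_of_not_injective_depth hG hlong hinj
  have hdepth_a := T.depth_eq har
  have hdepth_c := T.depth_eq hcr
  have := hct.depth_le
  omega

lemma not_adj_root_of_not_injective_depth (hG : G.Connected)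
    (hlong : IsLongestPath (T.branch t)) (hinj : ¬Function.Injective T.depth) :
    ¬G.Adj r t := by
  intro hrt
  have hlen : 2 ≤ (T.branch t).length := by
    rw [T.length_branch]
    exact two_le_depth_of_not_injective_depth hG hlong hinj
  have hall : ∀ x, T.IsAncestor x t := fun x =>
    T.mem_support_branch.1 (hlong.mem_support_of_adj_ends hG hrt hlen x)
  exact hinj fun u v huv => (hall u).eq_of_depth_eq (hall v) huv

lemma three_le_maxDegree_of_not_injective_depth [Fintype V] [DecidableRel G.Adj]
    (hG : G.Connected) (hlong : IsLongestPath (T.branch t))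
    (hinj : ¬Function.Injective T.depth) : 3 ≤ G.maxDegree := by
  obtain ⟨a, b, c, har, hca, hct, hab, hbt⟩ :=
    exists_branching_of_not_injective_depth hG hlong hinj
  have hac : T.IsAncestor a c := hca.2 ▸ T.isAncestor_parent c
  have hpc : T.parent a ≠ c := fun h => parent_notMem_children har (h ▸ hca)
  have hpb : T.parent a ≠ b := fun h =>
    hbt (h ▸ ((T.isAncestor_parent a).trans hac).trans hct)
  have hcb : c ≠ b := fun h => hbt (h ▸ hct)
  calc 3 = ({T.parent a, c, b} : Set V).ncard :=
        (Set.ncard_eq_three.2 ⟨_, _, _, hpc, hpb, hcb, rfl⟩).symm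
    _ ≤ (G.neighborSet a).ncard := by
        refine Set.ncard_le_ncard ?_ (Set.toFinite _)
        rintro _ (rfl | rfl | rfl)
        · exact T.adj_parent har
        · exact children_subset_neighborSet hca
        · exact hab
    _ = G.degree a := ncard_neighborSet a
    _ ≤ G.maxDegree := G.degree_le_maxDegree a

end Degrees

section LeafColoring

/-- The set of vertices of the tree other than the leaves different from `t`. -/
def core (T : RootedSpanningTree G r) (t : V) : Set V := {x | T.IsLeaf x → x = t}

open Classical in
/-- The coloring in which the tree edges of `T.core t` get color `0`, and the other edges at a leaf
`l` get color `1` if they lead to a vertex of `X l` and color `2` otherwise. -/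
noncomputable def leafColoring (T : RootedSpanningTree G r) (t : V) (X : V → Set V) (e : Sym2 V) :
    Fin 3 :=
  if e ∈ T.parentEdges (T.core t) then 0
  else if ∃ l u, T.IsLeaf l ∧ u ∉ X l ∧ e = s(l, u) then 2 else 1

variable {T : RootedSpanningTree G r} {l t : V} {X : V → Set V} {C : Set V}

lemma parent_mem_core (x : V) : T.parent x ∈ T.core t := by
  rintro ⟨hpr, hempty⟩
  have hx : x ≠ r := fun hx => hpr (by rw [hx, T.parent_root])
  exact absurd (show x ∈ T.children (T.parent x) from ⟨hx, rfl⟩) (hempty ▸ Set.notMem_empty x)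

lemma root_mem_core : r ∈ T.core t := fun hr => absurd rfl hr.1

lemma isLeaf_of_notMem_core (hx : x ∉ T.core t) : T.IsLeaf x := by
  by_contra hleaf
  exact hx fun h => absurd h hleaf

namespace IsLeaf

lemma eq_of_isAncestor (hl : T.IsLeaf l) (h : T.IsAncestor l x) : l = x := by
  by_contra hne
  obtain ⟨c, hcr, hcl, -⟩ := h.exists_child hne
  exact (hl.2 ▸ Set.notMem_empty c) ⟨hcr, hcl⟩

lemma isAncestor_parent_of_adj (hl : T.IsLeaf l) (hnormal : T.IsNormal) (hlu : G.Adj l u) :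
    T.IsAncestor u (T.parent l) := by
  rcases hnormal hlu with h | h
  · exact absurd (hl.eq_of_isAncestor h) hlu.ne
  · exact h.parent_of_ne hlu.ne.symm

lemma not_isLeaf_of_adj (hl : T.IsLeaf l) (hnormal : T.IsNormal) (hlu : G.Adj l u) :
    ¬T.IsLeaf u := fun hu =>
  hlu.ne (hu.eq_of_isAncestor (hl.isAncestor_parent_of_adj hnormal hlu).of_parent).symm

lemma mk_mem_parentEdges_iff (hl : T.IsLeaf l) :
    s(l, u) ∈ T.parentEdges C ↔ l ∈ C ∧ u = T.parent l := by
  rw [RootedSpanningTree.mk_mem_parentEdges_iff, hl.2]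
  simp only [children, Set.mem_ofPred_eq, Set.mem_empty_iff_false, and_false, or_false]
  exact and_congr_right fun _ => ⟨fun h => h.2.symm, fun h => ⟨hl.1, h.symm⟩⟩

end IsLeaf

lemma leafColoring_eq_zero_iff {e : Sym2 V} :
    T.leafColoring t X e = 0 ↔ e ∈ T.parentEdges (T.core t) := by
  unfold leafColoring
  split_ifs <;> simp_all

lemma leafColoring_eq_two_iff {e : Sym2 V} : T.leafColoring t X e = 2 ↔
    e ∉ T.parentEdges (T.core t) ∧ ∃ l u, T.IsLeaf l ∧ u ∉ X l ∧ e = s(l, u) := by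
  unfold leafColoring
  split_ifs <;> simp_all

lemma leafColoring_leaf_eq_two_iff (hnormal : T.IsNormal) (hl : T.IsLeaf l) (hlu : G.Adj l u) :
    T.leafColoring t X s(l, u) = 2 ↔ (l = t → u ≠ T.parent l) ∧ u ∉ X l := by
  have hedge : s(l, u) ∉ T.parentEdges (T.core t) ↔ (l = t → u ≠ T.parent l) := by
    have hcore : l ∈ T.core t ↔ l = t := ⟨fun h => h hl, fun h _ => h⟩
    rw [hl.mk_mem_parentEdges_iff, hcore, not_and]
  rw [leafColoring_eq_two_iff, hedge]
  refine and_congr_right fun _ => ⟨?_, fun hu => ⟨l, u, hl, hu, rfl⟩⟩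
  rintro ⟨l', u', hl', hu', heq⟩
  rcases Sym2.eq_iff.1 heq with ⟨rfl, rfl⟩ | ⟨rfl, rfl⟩
  · exact hu'
  · exact absurd hl' (hl.not_isLeaf_of_adj hnormal hlu)

lemma colorNeighborSet_leafColoring_one (hnormal : T.IsNormal) (hl : l ∉ T.core t)
    (hX : X l ⊆ G.neighborSet l) : colorNeighborSet G (T.leafColoring t X) 1 l = X l := by
  have hleaf := isLeaf_of_notMem_core hl
  have hlt : l ≠ t := fun h => hl fun _ => h
  ext u
  by_cases hlu : G.Adj l u
  · have hzero : T.leafColoring t X s(l, u) ≠ 0 := by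
      rw [Ne, leafColoring_eq_zero_iff, hleaf.mk_mem_parentEdges_iff]
      exact fun h => hl h.1
    have htwo := leafColoring_leaf_eq_two_iff (t := t) (X := X) hnormal hleaf hlu
    have hone : T.leafColoring t X s(l, u) = 1 ↔ T.leafColoring t X s(l, u) ≠ 2 := by
      generalize T.leafColoring t X s(l, u) = c at hzero
      fin_cases c <;> simp_all
    rw [colorNeighborSet, Set.mem_ofPred_eq, hone, Ne, htwo]
    simp only [hlu, hlt, true_and, false_imp_iff, not_not]
  · exact iff_of_false (fun h => hlu h.1) fun h => hlu (hX h)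

lemma colorNeighborSet_leafColoring_two_root_nonempty_iff (hnormal : T.IsNormal)
    (hrt : ¬G.Adj r t) : (colorNeighborSet G (T.leafColoring t X) 2 r).Nonempty ↔
      ∃ l, T.IsLeaf l ∧ G.Adj r l ∧ r ∉ X l := by
  constructor
  · rintro ⟨u, hru, hcolor⟩
    obtain ⟨-, l, u', hl, hu', heq⟩ := leafColoring_eq_two_iff.1 hcolor
    rcases Sym2.eq_iff.1 heq with ⟨rfl, rfl⟩ | ⟨rfl, rfl⟩
    · exact absurd rfl hl.1
    · exact ⟨u, hl, hru, hu'⟩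
  · rintro ⟨l, hl, hrl, hX⟩
    refine ⟨l, hrl, ?_⟩
    rw [Sym2.eq_swap, leafColoring_leaf_eq_two_iff hnormal hl hrl.symm]
    exact ⟨fun hlt => absurd (hlt ▸ hrl) hrt, hX⟩

lemma colorNeighborSet_leafColoring_two_leaf_nonempty_iff (hnormal : T.IsNormal)
    (ht : T.IsLeaf t) : (colorNeighborSet G (T.leafColoring t X) 2 t).Nonempty ↔
      ∃ u, G.Adj t u ∧ u ≠ T.parent t ∧ u ∉ X t :=
  exists_congr fun _ => and_congr_right fun htu => by
    rw [leafColoring_leaf_eq_two_iff hnormal ht htu]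
    simp only [forall_const]

open Classical Function in
/-- The edges at `t` outside the tree are still free, and used to tell `t` from the root. -/
lemma exists_update_leafColoring_two_not_iff (hnormal : T.IsNormal) (ht : T.IsLeaf t)
    (hrt : ¬G.Adj r t) (htu : ∃ u, G.Adj t u ∧ u ≠ T.parent t) (X : V → Set V) :
    ∃ Y, ¬((colorNeighborSet G (T.leafColoring t (update X t Y)) 2 r).Nonempty ↔
      (colorNeighborSet G (T.leafColoring t (update X t Y)) 2 t).Nonempty) := by
  have hroot : ∀ Y, (∃ l, T.IsLeaf l ∧ G.Adj r l ∧ r ∉ update X t Y l) ↔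
      ∃ l, T.IsLeaf l ∧ G.Adj r l ∧ r ∉ X l := fun Y =>
    exists_congr fun l => and_congr_right fun _ => and_congr_right fun hrl => by
      rw [update_of_ne (show l ≠ t from fun hlt => hrt (hlt ▸ hrl))]
  simp only [colorNeighborSet_leafColoring_two_root_nonempty_iff hnormal hrt, hroot,
    colorNeighborSet_leafColoring_two_leaf_nonempty_iff hnormal ht, update_self]
  obtain ⟨u, hu, hup⟩ := htu
  by_cases hA : ∃ l, T.IsLeaf l ∧ G.Adj r l ∧ r ∉ X l
  · exact ⟨Set.univ, fun h => by simpa using h.1 hA⟩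
  · exact ⟨∅, fun h => hA (h.2 ⟨u, hu, hup, Set.notMem_empty u⟩)⟩

end LeafColoring

section Asymmetry

variable {T : RootedSpanningTree G r} {t : V} {X : V → Set V} {σ : G ≃g G}

lemma mem_parentEdges_core_of_mem_edges_branch {e : Sym2 V} (he : e ∈ (T.branch t).edges) :
    e ∈ T.parentEdges (T.core t) := by
  obtain ⟨y, hyr, hyt, rfl⟩ := T.exists_of_mem_edges_branch he
  exact mk_parent_mem_parentEdges (fun hy => hy.eq_of_isAncestor hyt) hyr

lemma isLeaf_of_isLongestPath_branch (hlong : IsLongestPath (T.branch t)) (ht : t ≠ r) :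
    T.IsLeaf t :=
  isLeaf_of_isLongestPath hlong (fun _ he =>
    parentEdges_mono (Set.subset_univ _) (mem_parentEdges_core_of_mem_edges_branch he)) ht

lemma eq_root_or_eq_of_isLongestPath {a b : V} {p : G.Walk a b} (hp : IsLongestPath p)
    (hlen : 0 < p.length) (hedges : ∀ e ∈ p.edges, e ∈ T.parentEdges (T.core t)) :
    a = r ∨ a = t := by
  by_contra! hne
  have hleaf : T.IsLeaf a := isLeaf_of_isLongestPath hp
    (fun e he => parentEdges_mono (Set.subset_univ _) (hedges e he)) hne.1
  cases p with
  | nil => exact absurd rfl hlen.ne'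
  | cons h p =>
    have hedge := hedges _ (by rw [Walk.edges_cons]; exact List.mem_cons_self)
    exact hne.2 ((hleaf.mk_mem_parentEdges_iff.1 hedge).1 hleaf)

lemma map_ends_eq (hlong : IsLongestPath (T.branch t)) (htr : t ≠ r)
    (hσ : IsColorPreserving (T.leafColoring t X) σ)
    (htwo : ¬((colorNeighborSet G (T.leafColoring t X) 2 r).Nonempty ↔
      (colorNeighborSet G (T.leafColoring t X) 2 t).Nonempty)) : σ r = r ∧ σ t = t := by
  have hlong' := hlong.map_iso σ
  have hlen : 0 < ((T.branch t).map σ.toHom).length := by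
    rw [Walk.length_map, T.length_branch, Nat.pos_iff_ne_zero, Ne, T.depth_eq_zero_iff]
    exact htr
  have hedges : ∀ e ∈ ((T.branch t).map σ.toHom).edges, e ∈ T.parentEdges (T.core t) :=
    fun e he => leafColoring_eq_zero_iff.1 <| hσ.color_eq_of_mem_edges_map
      (fun e he => leafColoring_eq_zero_iff.2 (mem_parentEdges_core_of_mem_edges_branch he)) e he
  have hr : σ r = r ∨ σ r = t := eq_root_or_eq_of_isLongestPath hlong'.reverse
    (by rwa [Walk.length_reverse]) (by simpa only [Walk.edges_reverse, List.mem_reverse])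
  have ht : σ t = r ∨ σ t = t := eq_root_or_eq_of_isLongestPath hlong' hlen hedges
  have hrt : σ r ≠ t := fun h => htwo (by rw [← hσ.colorNeighborSet_nonempty_iff, h])
  have hr' := hr.resolve_right hrt
  exact ⟨hr', ht.resolve_left fun h => htr (σ.injective (h.trans hr'.symm))⟩

lemma map_core (hσ : IsColorPreserving (T.leafColoring t X) σ) (hr : σ r = r)
    (hx : x ∈ T.core t) :
    σ x ∈ T.core t ∧ T.depth (σ x) = T.depth x ∧ T.parent (σ x) = σ (T.parent x) := by
  refine map_mem_and_depth_map_and_parent_map (fun y _ => parent_mem_core y) root_mem_core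
    σ.injective hr (fun y hy hyr => ?_) hx
  rw [← leafColoring_eq_zero_iff (X := X), hσ _ _ (T.adj_parent hyr), leafColoring_eq_zero_iff]
  exact mk_parent_mem_parentEdges hy hyr

lemma map_mem_core_iff (hσ : IsColorPreserving (T.leafColoring t X) σ) (hr : σ r = r) :
    σ x ∈ T.core t ↔ x ∈ T.core t := by
  refine ⟨fun hx => ?_, fun hx => (map_core hσ hr hx).1⟩
  have hr' : σ.symm r = r := by rw [RelIso.symm_apply_eq, hr]
  simpa only [RelIso.symm_apply_apply] using (map_core hσ.symm hr' hx).1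

lemma isAncestor_map_parent (hnormal : T.IsNormal)
    (hσ : IsColorPreserving (T.leafColoring t X) σ) (hr : σ r = r) (hx : x ∉ T.core t) :
    T.IsAncestor (σ (T.parent x)) (T.parent (σ x)) := by
  have hleaf : T.IsLeaf (σ x) :=
    isLeaf_of_notMem_core (mt (map_mem_core_iff hσ hr).1 hx)
  exact hleaf.isAncestor_parent_of_adj hnormal
    (σ.map_adj_iff.2 (T.adj_parent (isLeaf_of_notMem_core hx).1))

lemma depth_parent_le_depth_parent_map (hnormal : T.IsNormal)
    (hσ : IsColorPreserving (T.leafColoring t X) σ) (hr : σ r = r) (hx : x ∉ T.core t) :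
    T.depth (T.parent x) ≤ T.depth (T.parent (σ x)) := by
  rw [← (map_core hσ hr (parent_mem_core x)).2.1]
  exact (isAncestor_map_parent hnormal hσ hr hx).depth_le

/-- The parent of a leaf is its deepest neighbor, and the depth of the neighbors of a leaf is
preserved. -/
lemma parent_map (hnormal : T.IsNormal) (hσ : IsColorPreserving (T.leafColoring t X) σ)
    (hr : σ r = r) (x : V) : T.parent (σ x) = σ (T.parent x) := by
  by_cases hx : x ∈ T.core t
  · exact (map_core hσ hr hx).2.2
  · have hr' : σ.symm r = r := by rw [RelIso.symm_apply_eq, hr]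
    have hle := depth_parent_le_depth_parent_map hnormal hσ.symm hr'
      (mt (map_mem_core_iff hσ hr).1 hx)
    rw [RelIso.symm_apply_apply, ← (map_core hσ hr (parent_mem_core x)).2.1] at hle
    have hanc := isAncestor_map_parent hnormal hσ hr hx
    exact (T.isAncestor_refl _).eq_of_depth_eq hanc (hle.antisymm hanc.depth_le)

lemma isAsymmetricColoring_leafColoring [Finite V] {D : ℕ} [NeZero D] {label : V → ZMod D}
    (hnormal : T.IsNormal) (hlong : IsLongestPath (T.branch t)) (htr : t ≠ r)
    (hlabel : T.IsCyclicLabelling label) (hD : ∀ x, x ≠ r → (T.children x).ncard < D)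
    (hX : ∀ l, l ∉ T.core t → X l ⊆ G.neighborSet l ∧
      markedSetCode (T.parent l) (X l) = (label l).val)
    (htwo : ¬((colorNeighborSet G (T.leafColoring t X) 2 r).Nonempty ↔
      (colorNeighborSet G (T.leafColoring t X) 2 t).Nonempty)) :
    IsAsymmetricColoring G (T.leafColoring t X) := by
  intro σ hσ
  obtain ⟨hr, ht⟩ := map_ends_eq hlong htr hσ htwo
  refine hlabel.eq_self_of_parent_map (σ := σ.toEquiv) hD (parent_map hnormal hσ hr)
    fun l _ => ?_
  change label (σ l) = label l
  by_cases hl : l ∈ T.core t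
  · rw [hl ‹_›, ht]
  · have hσl : σ l ∉ T.core t := mt (map_mem_core_iff hσ hr).1 hl
    apply ZMod.val_injective D
    rw [← (hX _ hσl).2, ← (hX l hl).2, parent_map hnormal hσ hr,
      ← colorNeighborSet_leafColoring_one hnormal hσl (hX _ hσl).1,
      ← hσ.image_colorNeighborSet, markedSetCode_image σ.injective,
      colorNeighborSet_leafColoring_one hnormal hl (hX l hl).1]

end Asymmetry

section Existence

variable {T : RootedSpanningTree G r} {t : V}

lemma exists_subset_neighborSet_markedSetCode_eq [Fintype (G.neighborSet x)] (hx : x ≠ r) {n : ℕ}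
    (hn : n < 2 * G.degree x) : ∃ X ⊆ G.neighborSet x, markedSetCode (T.parent x) X = n :=
  exists_subset_markedSetCode_eq (T.adj_parent hx) (by rwa [ncard_neighborSet])

lemma exists_adj_ne_parent [Fintype (G.neighborSet x)] (hx : 2 ≤ G.degree x) :
    ∃ u, G.Adj x u ∧ u ≠ T.parent x :=
  Set.exists_ne_of_one_lt_ncard (s := G.neighborSet x) (by rwa [ncard_neighborSet]) _

open Classical in
lemma exists_isAsymmetricColoring_of_not_injective_depth [Fintype V] [DecidableRel G.Adj]
    (hG : G.Connected) (hdeg : G.maxDegree ≤ 2 * G.minDegree) (hnormal : T.IsNormal)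
    (hlong : IsLongestPath (T.branch t)) (hinj : ¬Function.Injective T.depth) :
    ∃ φ : Sym2 V → Fin 3, IsAsymmetricColoring G φ := by
  have hD := three_le_maxDegree_of_not_injective_depth hG hlong hinj
  have : NeZero G.maxDegree := ⟨by omega⟩
  have htr : t ≠ r := by
    have hdepth := two_le_depth_of_not_injective_depth hG hlong hinj
    rw [Ne, ← T.depth_eq_zero_iff]
    omega
  obtain ⟨label, hlabel⟩ := T.exists_isCyclicLabelling fun x =>
    ncard_children_le_degree.trans (G.degree_le_maxDegree x)
  have exists_code : ∀ l, ∃ X, l ≠ r →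
      X ⊆ G.neighborSet l ∧ markedSetCode (T.parent l) X = (label l).val := by
    intro l
    by_cases hl : l = r
    · exact ⟨∅, fun h => absurd hl h⟩
    · obtain ⟨X, hX⟩ := exists_subset_neighborSet_markedSetCode_eq (T := T) hl
        ((label l).val_lt.trans_le (hdeg.trans (Nat.mul_le_mul_left 2 (G.minDegree_le_degree l))))
      exact ⟨X, fun _ => hX⟩
  choose X hX using exists_code
  obtain ⟨Y, hY⟩ := exists_update_leafColoring_two_not_iff hnormal
    (isLeaf_of_isLongestPath_branch hlong htr) (not_adj_root_of_not_injective_depth hG hlong hinj)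
    (exists_adj_ne_parent (by have := G.minDegree_le_degree t; omega)) X
  refine ⟨_, isAsymmetricColoring_leafColoring hnormal hlong htr hlabel
    (fun x hx => (ncard_children_lt_degree hx).trans_le (G.degree_le_maxDegree x))
    (fun l hl => ?_) hY⟩
  rw [Function.update_of_ne (show l ≠ t from fun hlt => hl fun _ => hlt)]
  exact hX l (isLeaf_of_notMem_core hl).1

lemma exists_two_le_depth_of_injective_depth [Finite V] (hV : 2 < Nat.card V)
    (hinj : Function.Injective T.depth) : ∃ x, 2 ≤ T.depth x := by
  by_contra! hdepth
  have hcard := Nat.card_le_card_of_injective (fun x => (⟨T.depth x, hdepth x⟩ : Fin 2))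
    fun x y hxy => hinj (Fin.mk.inj hxy)
  rw [Nat.card_fin] at hcard
  omega

end Existence

end RootedSpanningTree

theorem stmt_19 {V : Type*} [Fintype V] (G : SimpleGraph V) [DecidableRel G.Adj]
    (hconn : G.Connected) (hdeg : G.maxDegree ≤ 2 * G.minDegree)
    (hK2 : IsEmpty (G ≃g (⊤ : SimpleGraph (Fin 2)))) :
    ∃ φ : Sym2 V → Fin 3,
      ∀ σ : G ≃g G, (∀ u v, G.Adj u v → φ s(σ u, σ v) = φ s(u, v)) → ∀ x, σ x = x := by
  rcases subsingleton_or_nontrivial V with _ | _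
  · exact ⟨fun _ => 0, fun σ _ x => Subsingleton.elim _ _⟩
  · obtain ⟨r, t, T, hnormal, hlong⟩ :=
      RootedSpanningTree.exists_isNormal_isLongestPath_branch hconn
    by_cases hinj : Function.Injective T.depth
    · obtain ⟨x, hx⟩ := RootedSpanningTree.exists_two_le_depth_of_injective_depth
        (two_lt_card_of_connected hconn hK2) hinj
      exact ⟨T.pathColoring, RootedSpanningTree.isAsymmetricColoring_pathColoring hinj hx⟩
    · exact RootedSpanningTree.exists_isAsymmetricColoring_of_not_injective_depth hconn hdeg
        hnormal hlong hinj
end
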